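/- For integers a_0, …, a_15, suppose that each of Re(α_1), Im(α_1), Re(α_2), Im(α_2) is congruent to 1 or −1 modulo 8. Then N_4 ≡ N_8 · N_16 + 2 (mod 16). -/

import Mathlib

/-!
Modulo `x⁴ - 1`, `x⁴ + 1` and `x⁸ + 1` the polynomial `f` becomes `∑ bₖ xᵏ`, `∑ cₖ xᵏ` and
`∑ eₖ xᵏ`, so `N₄`, `N₈`, `N₁₆` are polynomials in `b`, while `α₂` and `α₁` are the relative norms
down to `ℤ[i]` of `∑ cₖ ζ₈ᵏ` and of `∑ eₖ ζ₁₆ᵏ`. Oddness of `Re α₂` and `Im α₂` means that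
`p₀ + p₂` and `p₁ + p₃` are odd for `p = c`; they are then odd as well for `p = b` and for the
quadruple `p = r` of coordinates of the norm of `∑ eₖ ζ₁₆ᵏ` to `ℤ[ζ₈]`. For such `p` the congruence
`p₀p₂ ≡ p₁p₃` modulo `4` is equivalent to `N₄ ≡ N₈N₁₆ + 2` modulo `16` when `p = b`, and to
`Re α ≡ ±1` modulo `8` for `α = α₂` when `p = c` and for `α = α₁` when `p = r`. Since
`cₖ ≡ eₖ + eₖ₊₄` modulo `2` and `bₖ ≡ cₖ + 2 eₖ₊₄` modulo `4`, the congruences for `b` and `c` are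
equivalent exactly when `e₀e₆ + e₂e₄ + e₁e₇ + e₃e₅` is even, and this is what the congruence for
`r` amounts to.
-/

open Complex Finset

noncomputable def zeta16 : ℂ := Complex.exp (2 * Real.pi * Complex.I / 16)

noncomputable def fpoly (a : Fin 16 → ℤ) (x : ℂ) : ℂ := ∑ k : Fin 16, (a k : ℂ) * x ^ (k : ℕ)

noncomputable def Nprod (a : Fin 16 → ℤ) (d : ℕ) : ℂ :=
  ∏ l ∈ Finset.filter (fun l => Nat.gcd l 16 = d) (Finset.range 16), fpoly a (zeta16 ^ l)

def circMatrix (a : Fin 16 → ℤ) : Matrix (Fin 16) (Fin 16) ℤ := fun i j => a (i - j)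

def S16 : Set ℤ := { n | ∃ a : Fin 16 → ℤ, n = (circMatrix a).det }

def bcoef (a : Fin 16 → ℤ) (k : Fin 16) : ℤ := (a k + a (k + 8)) + (a (k + 4) + a (k + 12))
def ccoef (a : Fin 16 → ℤ) (k : Fin 16) : ℤ := (a k + a (k + 8)) - (a (k + 4) + a (k + 12))
def ecoef (a : Fin 16 → ℤ) (k : Fin 16) : ℤ := a k - a (k + 8)

section Evaluation

variable {R : Type*} [CommRing R] {n : ℕ}

/-- The value at `x` of the polynomial with coefficients `p`. -/
def evalCoeffs (p : Fin n → ℤ) (x : R) : R := ∑ k, (p k : R) * x ^ (k : ℕ)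

lemma evalCoeffs_eq_of_pow_eq (p : Fin (n + n) → ℤ) {x : R} {ε : ℤ} (hx : x ^ n = ε) :
    evalCoeffs p x = evalCoeffs (fun k => p (k.castAdd n) + ε * p (k.natAdd n)) x := by
  simp only [evalCoeffs, Fin.sum_univ_add, ← sum_add_distrib, Fin.val_castAdd, Fin.val_natAdd,
    pow_add, hx]
  push_cast
  exact sum_congr rfl fun k _ => by ring

/-- The coordinates in `1, y, y², y³`, where `y = w²`, of the relative norm `e(w) e(-w)` for
`w⁸ = -1`. -/
def relNorm (e : Fin 8 → ℤ) : Fin 4 → ℤ :=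
  ![e 0 ^ 2 - e 4 ^ 2 + 2 * (e 1 * e 7 + e 3 * e 5 - e 2 * e 6),
    e 5 ^ 2 - e 1 ^ 2 + 2 * (e 0 * e 2 + e 3 * e 7 - e 4 * e 6),
    e 2 ^ 2 - e 6 ^ 2 + 2 * (e 0 * e 4 + e 5 * e 7 - e 1 * e 3),
    e 7 ^ 2 - e 3 ^ 2 + 2 * (e 0 * e 6 + e 2 * e 4 - e 1 * e 5)]

lemma evalCoeffs_mul_evalCoeffs_neg_eq_relNorm (e : Fin 8 → ℤ) {w : R} (hw : w ^ 8 = -1) :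
    evalCoeffs e w * evalCoeffs e (-w) = evalCoeffs (relNorm e) (w ^ 2) := by
  simp only [evalCoeffs, Fin.sum_univ_eight, Fin.isValue, Fin.coe_ofNat_eq_mod, Nat.zero_mod,
    pow_zero, mul_one, Nat.one_mod, pow_one, Nat.reduceMod, Nat.mod_succ, mul_neg, even_two,
    Even.neg_pow, relNorm, Fin.sum_univ_four, Matrix.cons_val_zero, Int.cast_add, Int.cast_sub,
    Int.cast_pow, Int.cast_mul, Int.cast_ofNat, Matrix.cons_val_one, Matrix.cons_val]
  linear_combination ((e 4 ^ 2 + 2 * e 2 * e 6 - 2 * e 1 * e 7 - 2 * e 3 * e 5 : R)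
    + (2 * e 4 * e 6 - 2 * e 3 * e 7 - e 5 ^ 2) * w ^ 2 + (e 6 ^ 2 - 2 * e 5 * e 7) * w ^ 4
    - e 7 ^ 2 * w ^ 6) * hw

/-- The relative norm `p(y) p(-y)` as a Gaussian integer, for `y² = i`. -/
def gaussNorm (p : Fin 4 → ℤ) : GaussianInt :=
  ⟨p 0 ^ 2 - p 2 ^ 2 + 2 * (p 1 * p 3), 2 * (p 0 * p 2) - p 1 ^ 2 + p 3 ^ 2⟩

lemma evalCoeffs_mul_evalCoeffs_neg_eq_gaussNorm (p : Fin 4 → ℤ) {y : ℂ} (hy : y ^ 2 = I) :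
    evalCoeffs p y * evalCoeffs p (-y) = gaussNorm p := by
  rw [gaussNorm, GaussianInt.toComplex_def']
  simp only [evalCoeffs, Fin.sum_univ_four, Fin.isValue, Fin.coe_ofNat_eq_mod, Nat.zero_mod,
    pow_zero, mul_one, Nat.one_mod, pow_one, Nat.reduceMod, Nat.mod_succ, mul_neg, even_two,
    Even.neg_pow, Int.cast_add, Int.cast_sub, Int.cast_pow, Int.cast_mul, Int.cast_ofNat]
  have hy₄ : y ^ 4 = -1 := by rw [← I_sq, ← hy]; ring
  linear_combination (2 * p 0 * p 2 - p 1 ^ 2 + p 3 ^ 2 : ℂ) * hy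
    + (p 2 ^ 2 - 2 * p 1 * p 3 - p 3 ^ 2 * y ^ 2 : ℂ) * hy₄

end Evaluation

section Reduction

/-- The first `n` entries of a coefficient vector. The vectors `bcoef a`, `ccoef a` and `ecoef a`
are periodic or antiperiodic in their index, so they are determined by 4, 4 and 8 entries. -/
def firstCoeffs (n : ℕ) (v : Fin 16 → ℤ) (hn : n ≤ 16 := by decide) : Fin n → ℤ :=
  fun k => v (k.castLE hn)

lemma fpoly_eq_evalCoeffs (a : Fin 16 → ℤ) (x : ℂ) : fpoly a x = evalCoeffs (n := 8 + 8) a x := rfl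

lemma fpoly_eq_evalCoeffs_ecoef (a : Fin 16 → ℤ) {w : ℂ} (hw : w ^ 8 = -1) :
    fpoly a w = evalCoeffs (firstCoeffs 8 (ecoef a)) w := by
  rw [fpoly_eq_evalCoeffs, evalCoeffs_eq_of_pow_eq (n := 8) a (ε := -1) (by simpa using hw)]
  simp only [neg_one_mul, ← sub_eq_add_neg]
  congr 1
  funext k
  fin_cases k <;> rfl

lemma fpoly_eq_evalCoeffs_of_pow_four (a : Fin 16 → ℤ) {y : ℂ} {ε : ℤ} (hε : ε ^ 2 = 1)
    (hy : y ^ 4 = ε) :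
    fpoly a y
      = evalCoeffs (firstCoeffs 4 fun k => (a k + a (k + 8)) + ε * (a (k + 4) + a (k + 12))) y := by
  have hy₈ : y ^ 8 = (1 : ℤ) := by
    rw [← hε, Int.cast_pow, ← hy, ← pow_mul]
  rw [fpoly_eq_evalCoeffs, evalCoeffs_eq_of_pow_eq a hy₈, evalCoeffs_eq_of_pow_eq (n := 4) _ hy]
  simp only [one_mul]
  congr 1
  funext k
  fin_cases k <;> rfl

lemma fpoly_eq_evalCoeffs_ccoef (a : Fin 16 → ℤ) {y : ℂ} (hy : y ^ 4 = -1) :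
    fpoly a y = evalCoeffs (firstCoeffs 4 (ccoef a)) y := by
  rw [fpoly_eq_evalCoeffs_of_pow_four a (ε := -1) (by norm_num) (by simpa using hy)]
  simp only [neg_one_mul, ← sub_eq_add_neg]
  rfl

lemma fpoly_eq_bcoef (a : Fin 16 → ℤ) {y : ℂ} (hy : y ^ 4 = 1) :
    fpoly a y = bcoef a 0 + bcoef a 1 * y + bcoef a 2 * y ^ 2 + bcoef a 3 * y ^ 3 := by
  rw [fpoly_eq_evalCoeffs_of_pow_four a (ε := 1) (by norm_num) (by simpa using hy)]
  simp [evalCoeffs, firstCoeffs, Fin.sum_univ_four, bcoef]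

lemma ccoef_modEq (a : Fin 16 → ℤ) (k : Fin 16) :
    ccoef a k ≡ ecoef a k + ecoef a (k + 4) [ZMOD 2] := by
  have h : k + 4 + 8 = k + 12 := by rw [add_assoc]; rfl
  simp only [ccoef, ecoef, h, Int.ModEq]
  omega

lemma bcoef_modEq (a : Fin 16 → ℤ) (k : Fin 16) :
    bcoef a k ≡ ccoef a k + 2 * ecoef a (k + 4) [ZMOD 4] := by
  have h : k + 4 + 8 = k + 12 := by rw [add_assoc]; rfl
  simp only [bcoef, ccoef, ecoef, h, Int.ModEq]
  omega

end Reduction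

section Norms

lemma zeta16_pow_four : zeta16 ^ 4 = I := by
  rw [zeta16, ← Complex.exp_nat_mul]
  convert Complex.exp_pi_div_two_mul_I using 2
  push_cast
  ring

lemma zeta16_pow_eight : zeta16 ^ 8 = -1 := by
  rw [← I_sq, ← zeta16_pow_four, ← pow_mul]

/-- The relative norm of `f(ζ₁₆)` from `ℤ[ζ₁₆]` to `ℤ[i]`. -/
noncomputable def alpha₁ (a : Fin 16 → ℤ) : ℂ :=
  fpoly a zeta16 * fpoly a (zeta16 ^ 5) * fpoly a (zeta16 ^ 9) * fpoly a (zeta16 ^ 13)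

/-- The relative norm of `f(ζ₈)` from `ℤ[ζ₈]` to `ℤ[i]`, with `ζ₈ = ζ₁₆²`. -/
noncomputable def alpha₂ (a : Fin 16 → ℤ) : ℂ :=
  fpoly a (zeta16 ^ 2) * fpoly a ((zeta16 ^ 2) ^ 5)

lemma alpha₂_eq_gaussNorm (a : Fin 16 → ℤ) :
    alpha₂ a = gaussNorm (firstCoeffs 4 (ccoef a)) := by
  have hz := zeta16_pow_eight
  have hconj : (zeta16 ^ 2) ^ 5 = -zeta16 ^ 2 := by linear_combination zeta16 ^ 2 * hz
  rw [alpha₂, hconj, fpoly_eq_evalCoeffs_ccoef a (by linear_combination hz),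
    fpoly_eq_evalCoeffs_ccoef a (by linear_combination hz),
    evalCoeffs_mul_evalCoeffs_neg_eq_gaussNorm _ (by rw [← pow_mul, zeta16_pow_four])]

lemma fpoly_mul_fpoly_neg (a : Fin 16 → ℤ) {w : ℂ} (hw : w ^ 8 = -1) :
    fpoly a w * fpoly a (-w) = evalCoeffs (relNorm (firstCoeffs 8 (ecoef a))) (w ^ 2) := by
  rw [fpoly_eq_evalCoeffs_ecoef a hw,
    fpoly_eq_evalCoeffs_ecoef a (by rwa [Even.neg_pow (by decide)]),
    evalCoeffs_mul_evalCoeffs_neg_eq_relNorm _ hw]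

lemma alpha₁_eq_gaussNorm (a : Fin 16 → ℤ) :
    alpha₁ a = gaussNorm (relNorm (firstCoeffs 8 (ecoef a))) := by
  have hz := zeta16_pow_eight
  calc
    alpha₁ a = (fpoly a zeta16 * fpoly a (-zeta16))
        * (fpoly a (zeta16 ^ 5) * fpoly a (-zeta16 ^ 5)) := by
      have h₉ : zeta16 ^ 9 = -zeta16 := by linear_combination zeta16 * hz
      have h₁₃ : zeta16 ^ 13 = -zeta16 ^ 5 := by linear_combination zeta16 ^ 5 * hz
      rw [alpha₁, h₉, h₁₃]
      ring
    _ = evalCoeffs (relNorm (firstCoeffs 8 (ecoef a))) (zeta16 ^ 2)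
        * evalCoeffs (relNorm (firstCoeffs 8 (ecoef a))) (-zeta16 ^ 2) := by
      have hsq : (zeta16 ^ 5) ^ 2 = -zeta16 ^ 2 := by linear_combination zeta16 ^ 2 * hz
      have hz₅ : (zeta16 ^ 5) ^ 8 = -1 := by rw [pow_right_comm, hz]; norm_num
      rw [fpoly_mul_fpoly_neg a hz, fpoly_mul_fpoly_neg a hz₅, hsq]
    _ = gaussNorm (relNorm (firstCoeffs 8 (ecoef a))) :=
      evalCoeffs_mul_evalCoeffs_neg_eq_gaussNorm _ (by rw [← pow_mul, zeta16_pow_four])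

lemma Nprod_four (a : Fin 16 → ℤ) :
    Nprod a 4 = (((bcoef a 0 - bcoef a 2) ^ 2 + (bcoef a 1 - bcoef a 3) ^ 2 : ℤ) : ℂ) := by
  have hindex : (range 16).filter (fun l => Nat.gcd l 16 = 4) = {4, 12} := by decide
  have h₁₂ : zeta16 ^ 12 = -I := by
    linear_combination zeta16 ^ 4 * zeta16_pow_eight - zeta16_pow_four
  have hI : fpoly a I = (bcoef a 0 - bcoef a 2) + (bcoef a 1 - bcoef a 3) * I := by
    rw [fpoly_eq_bcoef a I_pow_four, I_sq, I_pow_three]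
    ring
  have hnegI : fpoly a (-I) = (bcoef a 0 - bcoef a 2) - (bcoef a 1 - bcoef a 3) * I := by
    rw [fpoly_eq_bcoef a (by rw [Even.neg_pow (by decide), I_pow_four]), neg_sq, I_sq,
      Odd.neg_pow (by decide), I_pow_three]
    ring
  rw [Nprod, hindex, prod_pair (by norm_num), zeta16_pow_four, h₁₂, hI, hnegI]
  push_cast
  linear_combination -((bcoef a 1 - bcoef a 3) ^ 2 : ℂ) * I_sq

lemma Nprod_eight (a : Fin 16 → ℤ) :
    Nprod a 8 = ((bcoef a 0 - bcoef a 1 + bcoef a 2 - bcoef a 3 : ℤ) : ℂ) := by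
  have hindex : (range 16).filter (fun l => Nat.gcd l 16 = 8) = {8} := by decide
  rw [Nprod, hindex, prod_singleton, zeta16_pow_eight, fpoly_eq_bcoef a (by norm_num)]
  push_cast
  ring

lemma Nprod_sixteen (a : Fin 16 → ℤ) :
    Nprod a 16 = ((bcoef a 0 + bcoef a 1 + bcoef a 2 + bcoef a 3 : ℤ) : ℂ) := by
  have hindex : (range 16).filter (fun l => Nat.gcd l 16 = 16) = {0} := by decide
  rw [Nprod, hindex, prod_singleton, pow_zero, fpoly_eq_bcoef a (by norm_num)]
  push_cast
  ring

end Norms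

section Congruences

lemma even_mul_of_odd_add {x y : ℤ} (h : Odd (x + y)) : Even (x * y) := by
  rw [Int.odd_add] at h
  rw [Int.even_mul, ← Int.not_odd_iff_even]
  tauto

lemma sq_add_sq_modEq_of_odd_add {x y : ℤ} (h : Odd (x + y)) :
    x ^ 2 + y ^ 2 ≡ 1 + 2 * (x * y) [ZMOD 8] := by
  have hsub : Odd (x - y) := by rwa [Int.odd_sub, ← Int.odd_add]
  refine (Int.modEq_iff_dvd.2 ?_).symm
  convert Int.eight_dvd_sq_sub_one_of_odd hsub using 1
  ring

lemma sq_sub_sq_modEq_of_odd_add {x y : ℤ} (h : Odd (x + y)) :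
    x ^ 2 - y ^ 2 ≡ 1 - 2 * (x * y) [ZMOD 8] ∨ x ^ 2 - y ^ 2 ≡ -1 - 2 * (x * y) [ZMOD 8] := by
  have hadd := sq_add_sq_modEq_of_odd_add h
  obtain ⟨m, hm⟩ := even_mul_of_odd_add h
  obtain hy | hy := Int.even_or_odd y
  · have hx := Int.eight_dvd_sq_sub_one_of_odd ((Int.odd_add.1 h).2 hy)
    simp only [hm, Int.ModEq] at hadd ⊢
    omega
  · have hy := Int.eight_dvd_sq_sub_one_of_odd hy
    simp only [hm, Int.ModEq] at hadd ⊢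
    omega

lemma odd_gaussNorm_re_iff (p : Fin 4 → ℤ) : Odd (gaussNorm p).re ↔ Odd (p 0 + p 2) := by
  simp [gaussNorm, Int.odd_add, Int.odd_sub, Int.odd_pow, Int.even_pow]

lemma odd_gaussNorm_im_iff (p : Fin 4 → ℤ) : Odd (gaussNorm p).im ↔ Odd (p 1 + p 3) := by
  simp only [gaussNorm, ← Int.not_even_iff_odd]
  simp [Int.even_add, Int.even_sub, Int.even_pow]

lemma gaussNorm_re_modEq_iff {p : Fin 4 → ℤ} (h₀₂ : Odd (p 0 + p 2)) (h₁₃ : Odd (p 1 + p 3)) :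
    ((gaussNorm p).re ≡ 1 [ZMOD 8] ∨ (gaussNorm p).re ≡ -1 [ZMOD 8])
      ↔ p 0 * p 2 ≡ p 1 * p 3 [ZMOD 4] := by
  have hsq := sq_sub_sq_modEq_of_odd_add h₀₂
  obtain ⟨m, hm⟩ := even_mul_of_odd_add h₀₂
  obtain ⟨n, hn⟩ := even_mul_of_odd_add h₁₃
  simp only [gaussNorm, hm, hn, Int.ModEq] at hsq ⊢
  omega

lemma sq_sub_sq_modEq_zero_of_even_add {x y : ℤ} (h : Even (x + y)) :
    x ^ 2 - y ^ 2 ≡ 0 [ZMOD 4] := by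
  rw [Int.modEq_zero_iff_dvd, sq_sub_sq]
  have hsub : Even (x - y) := by rwa [Int.even_sub, ← Int.even_add]
  exact mul_dvd_mul h.two_dvd hsub.two_dvd

lemma odd_mul_modEq_two_mul {u v r : ℤ} (hu : Odd u) (hv : v ≡ 2 * r [ZMOD 4]) :
    u * v ≡ 2 * r [ZMOD 4] := by
  obtain ⟨k, rfl⟩ := hu
  refine (hv.mul_left _).trans (Int.modEq_iff_dvd.2 ⟨-(k * r), by ring⟩)

lemma sq_sub_sq_add_mul_modEq {x y z w s t r : ℤ} (h : Odd (x + y + (z + w)))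
    (hs : s ≡ z * w + r [ZMOD 2]) (ht : t ≡ x * y + r [ZMOD 2]) :
    (x ^ 2 - y ^ 2 + 2 * s) * (z ^ 2 - w ^ 2 + 2 * t) ≡ 2 * r [ZMOD 4] := by
  have odd_factor {u v k : ℤ} (huv : Odd (u + v)) : Odd (u ^ 2 - v ^ 2 + 2 * k) := by
    simpa [Int.odd_add, Int.odd_sub, Int.odd_pow, Int.even_pow] using huv
  have even_factor {u v p q k : ℤ} (huv : Odd (u + v)) (hpq : Even (p + q))
      (hk : k ≡ u * v + r [ZMOD 2]) : p ^ 2 - q ^ 2 + 2 * k ≡ 2 * r [ZMOD 4] := by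
    obtain ⟨m, hm⟩ := even_mul_of_odd_add huv
    have hsq := sq_sub_sq_modEq_zero_of_even_add hpq
    simp only [hm, Int.ModEq] at hk hsq ⊢
    omega
  obtain hxy | hxy := Int.even_or_odd (x + y)
  · have hzw : Odd (z + w) := Int.not_even_iff_odd.1 fun hzw =>
      Int.not_even_iff_odd.2 h (hxy.add hzw)
    rw [mul_comm]
    exact odd_mul_modEq_two_mul (odd_factor hzw) (even_factor hzw hxy hs)
  · exact odd_mul_modEq_two_mul (odd_factor hxy) (even_factor hxy ((Int.odd_add.1 h).1 hxy) ht)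

lemma mul_add_mul_modEq_of_odd {x y z w : ℤ} (h : Odd (x + y + (z + w))) :
    x * z + y * w ≡ x * w + y * z [ZMOD 2] := by
  have heven := even_mul_of_odd_add h
  refine (Int.modEq_iff_dvd.2 (even_iff_two_dvd.1 ?_)).symm
  have hsplit : x * z + y * w - (x * w + y * z)
      = (x + y) * (z + w) - 2 * (x * w + y * z) := by ring
  rw [hsplit]
  exact heven.sub (even_two_mul _)

/-- The quantity whose parity decides the congruences modulo `4` for `relNorm e` and for `bcoef`. -/
def crossSum (e : Fin 8 → ℤ) : ℤ := e 0 * e 6 + e 2 * e 4 + (e 1 * e 7 + e 3 * e 5)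

lemma odd_relNorm_zero_add_two_iff (e : Fin 8 → ℤ) :
    Odd (relNorm e 0 + relNorm e 2) ↔ Odd (e 0 + e 4 + (e 2 + e 6)) := by
  simp [relNorm, Int.odd_add, Int.odd_sub, Int.odd_pow, Int.even_pow, Int.even_add, Int.even_sub]

lemma odd_relNorm_one_add_three_iff (e : Fin 8 → ℤ) :
    Odd (relNorm e 1 + relNorm e 3) ↔ Odd (e 5 + e 1 + (e 7 + e 3)) := by
  simp [relNorm, Int.odd_add, Int.odd_sub, Int.odd_pow, Int.even_pow, Int.even_add, Int.even_sub]

lemma relNorm_mul_modEq_iff {e : Fin 8 → ℤ} (h₀₂ : Odd (e 0 + e 4 + (e 2 + e 6)))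
    (h₁₃ : Odd (e 5 + e 1 + (e 7 + e 3))) :
    relNorm e 0 * relNorm e 2 ≡ relNorm e 1 * relNorm e 3 [ZMOD 4] ↔ Even (crossSum e) := by
  have hmul₀₂ : relNorm e 0 * relNorm e 2 ≡ 2 * (e 1 * e 7 + e 3 * e 5) [ZMOD 4] := by
    have hcross := mul_add_mul_modEq_of_odd h₁₃
    refine sq_sub_sq_add_mul_modEq h₀₂ ?_ ?_ <;> grind [Int.ModEq]
  have hmul₁₃ : relNorm e 1 * relNorm e 3 ≡ 2 * (e 0 * e 6 + e 2 * e 4) [ZMOD 4] := by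
    have hcross := mul_add_mul_modEq_of_odd h₀₂
    refine sq_sub_sq_add_mul_modEq h₁₃ ?_ ?_ <;> grind [Int.ModEq]
  simp only [crossSum, Int.even_iff, Int.ModEq] at hmul₀₂ hmul₁₃ ⊢
  omega

lemma bcoef_mul_bcoef_modEq (a : Fin 16 → ℤ) (i j : Fin 16) :
    bcoef a i * bcoef a j ≡ ccoef a i * ccoef a j
      + 2 * (ecoef a i * ecoef a (j + 4) + ecoef a j * ecoef a (i + 4)) [ZMOD 4] := by
  obtain ⟨m, hm⟩ := (ccoef_modEq a i).dvd
  obtain ⟨n, hn⟩ := (ccoef_modEq a j).dvd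
  refine ((bcoef_modEq a i).mul (bcoef_modEq a j)).trans (Int.modEq_iff_dvd.2
    ⟨m * ecoef a (j + 4) + n * ecoef a (i + 4) - 2 * ecoef a (i + 4) * ecoef a (j + 4), ?_⟩)
  linear_combination 2 * ecoef a (j + 4) * hm + 2 * ecoef a (i + 4) * hn

lemma bcoef_mul_modEq_iff {a : Fin 16 → ℤ} (h₀₂ : Odd (ccoef a 0 + ccoef a 2))
    (h₁₃ : Odd (ccoef a 1 + ccoef a 3)) :
    bcoef a 0 * bcoef a 2 ≡ bcoef a 1 * bcoef a 3 [ZMOD 4] ↔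
      (Even (crossSum (firstCoeffs 8 (ecoef a))) ↔
        ccoef a 0 * ccoef a 2 ≡ ccoef a 1 * ccoef a 3 [ZMOD 4]) := by
  have hmul₀₂ := bcoef_mul_bcoef_modEq a 0 2
  have hmul₁₃ := bcoef_mul_bcoef_modEq a 1 3
  have hcross : crossSum (firstCoeffs 8 (ecoef a))
      = ecoef a 0 * ecoef a (2 + 4) + ecoef a 2 * ecoef a (0 + 4)
        + (ecoef a 1 * ecoef a (3 + 4) + ecoef a 3 * ecoef a (1 + 4)) := rfl
  obtain ⟨m, hm⟩ := even_mul_of_odd_add h₀₂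
  obtain ⟨n, hn⟩ := even_mul_of_odd_add h₁₃
  simp only [hcross, hm, hn, Int.even_iff, Int.ModEq] at hmul₀₂ hmul₁₃ ⊢
  omega

lemma odd_of_modEq_two {x y : ℤ} (hx : Odd x) (h : x ≡ y [ZMOD 2]) : Odd y := by
  rw [Int.odd_iff] at hx ⊢
  exact Eq.trans h.symm hx

lemma odd_bcoef_add_bcoef {a : Fin 16 → ℤ} {i j : Fin 16} (h : Odd (ccoef a i + ccoef a j)) :
    Odd (bcoef a i + bcoef a j) := by
  have hb := (bcoef_modEq a i).add (bcoef_modEq a j)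
  simp only [Int.odd_iff, Int.ModEq] at h hb ⊢
  omega

lemma sq_add_sq_modEq_mul_add_two_iff {b₀ b₁ b₂ b₃ : ℤ} (h : Odd (b₁ + b₃)) :
    (b₀ - b₂) ^ 2 + (b₁ - b₃) ^ 2 ≡ (b₀ - b₁ + b₂ - b₃) * (b₀ + b₁ + b₂ + b₃) + 2 [ZMOD 16]
      ↔ b₀ * b₂ ≡ b₁ * b₃ [ZMOD 4] := by
  have hdiff : (b₀ - b₂) ^ 2 + (b₁ - b₃) ^ 2 = (b₀ - b₁ + b₂ - b₃) * (b₀ + b₁ + b₂ + b₃)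
      + 2 * (b₁ ^ 2 + b₃ ^ 2) - 4 * (b₀ * b₂) := by ring
  have hsq := sq_add_sq_modEq_of_odd_add h
  simp only [hdiff, Int.ModEq] at hsq ⊢
  omega

end Congruences

section Criteria

/-- The real number `x` is an integer congruent to `1` or `-1` modulo `8`. -/
def IsOneOrNegOneModEight (x : ℝ) : Prop :=
  ∃ m : ℤ, x = ((8 * m + 1 : ℤ) : ℝ) ∨ x = ((8 * m - 1 : ℤ) : ℝ)

lemma isOneOrNegOneModEight_intCast (n : ℤ) :
    IsOneOrNegOneModEight n ↔ n ≡ 1 [ZMOD 8] ∨ n ≡ -1 [ZMOD 8] := by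
  simp only [IsOneOrNegOneModEight, Int.cast_inj, Int.ModEq]
  constructor
  · rintro ⟨m, h⟩
    omega
  · intro h
    exact ⟨(n + 1) / 8, by omega⟩

lemma IsOneOrNegOneModEight.exists_odd {x : ℝ} (h : IsOneOrNegOneModEight x) :
    ∃ n : ℤ, Odd n ∧ x = n := by
  obtain ⟨m, h | h⟩ := h
  · exact ⟨_, ⟨4 * m, by ring⟩, h⟩
  · exact ⟨_, ⟨4 * m - 1, by ring⟩, h⟩

lemma isOneOrNegOneModEight_gaussNorm_re_iff {p : Fin 4 → ℤ} (h₀₂ : Odd (p 0 + p 2))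
    (h₁₃ : Odd (p 1 + p 3)) :
    IsOneOrNegOneModEight (gaussNorm p : ℂ).re ↔ p 0 * p 2 ≡ p 1 * p 3 [ZMOD 4] := by
  rw [← GaussianInt.intCast_re, isOneOrNegOneModEight_intCast, gaussNorm_re_modEq_iff h₀₂ h₁₃]

lemma isOneOrNegOneModEight_alpha₂_re_iff {a : Fin 16 → ℤ} (h₀₂ : Odd (ccoef a 0 + ccoef a 2))
    (h₁₃ : Odd (ccoef a 1 + ccoef a 3)) :
    IsOneOrNegOneModEight (alpha₂ a).re ↔
      ccoef a 0 * ccoef a 2 ≡ ccoef a 1 * ccoef a 3 [ZMOD 4] := by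
  rw [alpha₂_eq_gaussNorm]
  exact isOneOrNegOneModEight_gaussNorm_re_iff h₀₂ h₁₃

lemma isOneOrNegOneModEight_alpha₁_re_iff {a : Fin 16 → ℤ} (h₀₂ : Odd (ccoef a 0 + ccoef a 2))
    (h₁₃ : Odd (ccoef a 1 + ccoef a 3)) :
    IsOneOrNegOneModEight (alpha₁ a).re ↔ Even (crossSum (firstCoeffs 8 (ecoef a))) := by
  have he₀₂ : Odd (ecoef a 0 + ecoef a 4 + (ecoef a 2 + ecoef a 6)) :=
    odd_of_modEq_two h₀₂ ((ccoef_modEq a 0).add (ccoef_modEq a 2))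
  have he₁₃ : Odd (ecoef a 5 + ecoef a 1 + (ecoef a 7 + ecoef a 3)) := by
    rw [add_comm (ecoef a 5), add_comm (ecoef a 7)]
    exact odd_of_modEq_two h₁₃ ((ccoef_modEq a 1).add (ccoef_modEq a 3))
  rw [alpha₁_eq_gaussNorm, isOneOrNegOneModEight_gaussNorm_re_iff
    ((odd_relNorm_zero_add_two_iff _).2 he₀₂) ((odd_relNorm_one_add_three_iff _).2 he₁₃)]
  exact relNorm_mul_modEq_iff he₀₂ he₁₃

lemma odd_ccoef_of_odd_alpha₂ {a : Fin 16 → ℤ} {m n : ℤ} (hm : Odd m) (hn : Odd n)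
    (hre : (alpha₂ a).re = m) (him : (alpha₂ a).im = n) :
    Odd (ccoef a 0 + ccoef a 2) ∧ Odd (ccoef a 1 + ccoef a 3) := by
  rw [alpha₂_eq_gaussNorm, ← GaussianInt.intCast_re, Int.cast_inj] at hre
  rw [alpha₂_eq_gaussNorm, ← GaussianInt.intCast_im, Int.cast_inj] at him
  exact ⟨(odd_gaussNorm_re_iff _).1 (hre ▸ hm), (odd_gaussNorm_im_iff _).1 (him ▸ hn)⟩

end Criteria

theorem N4_cong_N8N16_add_two_general (a : Fin 16 → ℤ) (N4 N8 N16 : ℤ)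
    (h4 : (N4 : ℂ) = Nprod a 4) (h8 : (N8 : ℂ) = Nprod a 8) (h16 : (N16 : ℂ) = Nprod a 16)
    (hre2 : ∃ m : ℤ, Odd m ∧ (alpha₂ a).re = m) (him2 : ∃ n : ℤ, Odd n ∧ (alpha₂ a).im = n) :
    N4 ≡ N8 * N16 + 2 [ZMOD 16] ↔
      (IsOneOrNegOneModEight (alpha₁ a).re ↔ IsOneOrNegOneModEight (alpha₂ a).re) := by
  obtain ⟨m, hm, hre⟩ := hre2
  obtain ⟨n, hn, him⟩ := him2
  obtain ⟨h₀₂, h₁₃⟩ := odd_ccoef_of_odd_alpha₂ hm hn hre him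
  rw [Nprod_four, Int.cast_inj] at h4
  rw [Nprod_eight, Int.cast_inj] at h8
  rw [Nprod_sixteen, Int.cast_inj] at h16
  rw [h4, h8, h16, sq_add_sq_modEq_mul_add_two_iff (odd_bcoef_add_bcoef h₁₃),
    bcoef_mul_modEq_iff h₀₂ h₁₃, isOneOrNegOneModEight_alpha₁_re_iff h₀₂ h₁₃,
    isOneOrNegOneModEight_alpha₂_re_iff h₀₂ h₁₃]

theorem N4_cong_N8N16_add_two (a : Fin 16 → ℤ)
    (N4 N8 N16 : ℤ)
    (h4 : (N4 : ℂ) = Nprod a 4) (h8 : (N8 : ℂ) = Nprod a 8) (h16 : (N16 : ℂ) = Nprod a 16)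
    (hre1 : ∃ m : ℤ,
      (fpoly a zeta16 * fpoly a (zeta16 ^ 5) * fpoly a (zeta16 ^ 9) * fpoly a (zeta16 ^ 13)).re
        = ((8 * m + 1 : ℤ) : ℝ) ∨
      (fpoly a zeta16 * fpoly a (zeta16 ^ 5) * fpoly a (zeta16 ^ 9) * fpoly a (zeta16 ^ 13)).re
        = ((8 * m - 1 : ℤ) : ℝ))
    (him1 : ∃ m : ℤ,
      (fpoly a zeta16 * fpoly a (zeta16 ^ 5) * fpoly a (zeta16 ^ 9) * fpoly a (zeta16 ^ 13)).im
        = ((8 * m + 1 : ℤ) : ℝ) ∨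
      (fpoly a zeta16 * fpoly a (zeta16 ^ 5) * fpoly a (zeta16 ^ 9) * fpoly a (zeta16 ^ 13)).im
        = ((8 * m - 1 : ℤ) : ℝ))
    (hre2 : ∃ m : ℤ,
      (fpoly a (zeta16 ^ 2) * fpoly a ((zeta16 ^ 2) ^ 5)).re = ((8 * m + 1 : ℤ) : ℝ) ∨
      (fpoly a (zeta16 ^ 2) * fpoly a ((zeta16 ^ 2) ^ 5)).re = ((8 * m - 1 : ℤ) : ℝ))
    (him2 : ∃ m : ℤ,
      (fpoly a (zeta16 ^ 2) * fpoly a ((zeta16 ^ 2) ^ 5)).im = ((8 * m + 1 : ℤ) : ℝ) ∨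
      (fpoly a (zeta16 ^ 2) * fpoly a ((zeta16 ^ 2) ^ 5)).im = ((8 * m - 1 : ℤ) : ℝ)) :
    N4 ≡ N8 * N16 + 2 [ZMOD 16] := by
  exact (N4_cong_N8N16_add_two_general a N4 N8 N16 h4 h8 h16
    (IsOneOrNegOneModEight.exists_odd hre2) (IsOneOrNegOneModEight.exists_odd him2)).2
      (iff_of_true hre1 hre2)
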